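/- Let p be an odd prime for which 2 is a primitive root modulo p (i.e., 2 has multiplicative order p−1 modulo p), let a ∈ {0,1,…,p−1} and j ∈ {0,1}. Then for every ε > 0 one has T^{(j)}_{p,a}(x) − x/(2p) = Ω(x^{α−ε}); that is, there exist a constant c > 0 and arbitrarily large x with |T^{(j)}_{p,a}(x) − x/(2p)| ≥ c·x^{α−ε}, where α = ln p / ((p−1)·ln 2). (Lower-bound half of Theorem 2.) -/

import Mathlib

/-!
Write `S x` for the sum of `(-1) ^ s n` over `n < x` with `n ≡ a (mod p)`. About `x / p` integers
`n < x` satisfy `n ≡ a (mod p)`, so `T - x / (2 p) = ± S x / 2 + O(1)`, and it suffices to make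
`S x` large. At `x = 2 ^ ((p - 1) M)`, where `x ^ α = p ^ M`, the sum can be evaluated exactly.
Detecting the congruence by the additive characters of `ZMod p` and splitting `n` into its binary
digits expresses `p S x` through the products `∏ (1 - z ^ 2 ^ k)` over `k < (p - 1) M`, for `z`
running over the `p`-th roots of unity. The root `z = 1` contributes `0`. For any other `z` the
exponents `2 ^ k` run `M` times through the nonzero residues, because `2` is a primitive root, and
`∏_{0 < i < p} (1 - z ^ i) = p`, so the product is `p ^ M`. Hence `p S x = p ^ M (p [a = 0] - 1)`.
-/

/-- `s n` is the number of 1's in the binary expansion of `n`. -/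
def s (n : ℕ) : ℕ := (Nat.digits 2 n).sum

/-- `T m a j x` counts natural numbers `n < x` with `n ≡ a (mod m)` and `s n ≡ j (mod 2)`. -/
def T (m a j x : ℕ) : ℕ :=
  ((Finset.range x).filter (fun n => n % m = a ∧ s n % 2 = j)).card

open Finset

section Products

variable {A : Type*}

lemma sum_range_two_mul [AddCommMonoid A] (f : ℕ → A) (m : ℕ) :
    ∑ n ∈ range (2 * m), f n = ∑ n ∈ range m, (f (2 * n) + f (2 * n + 1)) := by
  induction m with
  | zero => simp
  | succ m ih =>
    rw [sum_range_succ, ← ih, mul_add_one, sum_range_succ, sum_range_succ, add_assoc]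

lemma prod_range_mul_of_periodic [CommMonoid A] {f : ℕ → A} {d : ℕ} (hf : f.Periodic d) (M : ℕ) :
    ∏ k ∈ range (d * M), f k = (∏ k ∈ range d, f k) ^ M := by
  induction M with
  | zero => simp
  | succ M ih =>
    have hshift : ∀ k, f (d * M + k) = f k := fun k ↦ by
      rw [add_comm, mul_comm]
      exact hf.nat_mul M k
    rw [mul_add_one, prod_range_add, ih, pow_succ]
    simp only [hshift]

lemma image_pow_range_eq_compl_zero {F : Type*} [GroupWithZero F] [Fintype F] [DecidableEq F]
    {g : F} (hg : orderOf g = Fintype.card F - 1) :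
    (range (orderOf g)).image (g ^ ·) = {0}ᶜ := by
  have g_ne_zero : g ≠ 0 := by
    rintro rfl
    have := Fintype.one_lt_card (α := F)
    rw [orderOf_zero] at hg
    omega
  apply eq_of_subset_of_card_le
  · simp [subset_iff, g_ne_zero]
  · rw [card_image_of_injOn (by simpa using pow_injOn_Iio_orderOf), card_range, hg, card_compl,
      card_singleton]

lemma prod_range_pow_eq_prod_compl_zero [CommMonoid A] {F : Type*} [GroupWithZero F] [Fintype F]
    [DecidableEq F] {g : F} (hg : orderOf g = Fintype.card F - 1) (f : F → A) :
    ∏ k ∈ range (orderOf g), f (g ^ k) = ∏ x ∈ {0}ᶜ, f x := by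
  rw [← image_pow_range_eq_compl_zero hg, prod_image (by simpa using pow_injOn_Iio_orderOf)]

end Products

lemma pow_mul_rpow_log_div {b c : ℝ} (hb : 0 < b) (hb_one : b ≠ 1) (hc : 0 < c) {d : ℕ}
    (hd : d ≠ 0) (M : ℕ) : (b ^ (d * M)) ^ (Real.log c / (d * Real.log b)) = c ^ M := by
  have hexp : ((d * M : ℕ) : ℝ) * (Real.log c / (d * Real.log b)) = Real.logb b c * M := by
    rw [Real.logb]
    push_cast
    field_simp
  rw [← Real.rpow_natCast b, ← Real.rpow_mul hb.le, hexp, Real.rpow_mul hb.le,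
    Real.rpow_logb hb hb_one hc, Real.rpow_natCast]

lemma exists_mul_rpow_le_of_exponent_le {f : ℕ → ℝ} {α β : ℝ} (hβα : β ≤ α)
    (hf : ∃ c : ℝ, 0 < c ∧ ∀ X : ℕ, ∃ x : ℕ, X ≤ x ∧ c * (x : ℝ) ^ α ≤ f x) :
    ∃ c : ℝ, 0 < c ∧ ∀ X : ℕ, ∃ x : ℕ, X ≤ x ∧ c * (x : ℝ) ^ β ≤ f x := by
  obtain ⟨c, hc, hf⟩ := hf
  refine ⟨c, hc, fun X ↦ ?_⟩
  obtain ⟨x, hx, hfx⟩ := hf (X + 1)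
  have one_le : (1 : ℝ) ≤ x := mod_cast (Nat.le_add_left 1 X).trans hx
  refine ⟨x, (Nat.le_succ X).trans hx, le_trans ?_ hfx⟩
  gcongr

section RootsOfUnity

lemma pow_val_natCast {M : Type*} [Monoid M] {n : ℕ} {z : M} (hz : z ^ n = 1) (k : ℕ) :
    z ^ (k : ZMod n).val = z ^ k := by
  rw [ZMod.val_natCast, ← pow_eq_pow_mod k hz]

lemma periodic_pow_pow_orderOf {M : Type*} [Monoid M] {n : ℕ} {z : M} (hz : z ^ n = 1) (g : ℕ) :
    (fun k ↦ z ^ g ^ k).Periodic (orderOf (g : ZMod n)) := fun k ↦ by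
  have hval (l : ℕ) : z ^ g ^ l = z ^ ((g : ZMod n) ^ l).val := by
    rw [← Nat.cast_pow, pow_val_natCast hz]
  change z ^ g ^ (k + _) = z ^ g ^ k
  rw [hval, hval k, pow_add, pow_orderOf_eq_one, mul_one]

lemma isPrimitiveRoot_addChar_apply {M : Type*} [CommMonoid M] {p : ℕ} (hp : p.Prime)
    {ψ : AddChar (ZMod p) M} (hψ : ψ.IsPrimitive) {h : ZMod p} (hh : h ≠ 0) :
    IsPrimitiveRoot (ψ h) p := by
  have := Fact.mk hp
  rw [IsPrimitiveRoot.iff_orderOf]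
  refine orderOf_eq_prime ?_ fun h_one ↦ hh ((hψ.zmod_char_eq_one_iff p h).1 h_one)
  rw [← ψ.map_nsmul_eq_pow, nsmul_eq_mul, CharP.cast_eq_zero, zero_mul, ψ.map_zero_eq_one]

variable {R : Type*} [CommRing R] [IsDomain R]

lemma prod_compl_zero_one_sub_pow_val {n : ℕ} [NeZero n] {z : R} (hz : IsPrimitiveRoot z n) :
    ∏ x ∈ ({0}ᶜ : Finset (ZMod n)), (1 - z ^ x.val) = n := by
  obtain ⟨q, rfl⟩ := Nat.exists_eq_succ_of_ne_zero (NeZero.ne n)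
  change ∏ x ∈ ({0}ᶜ : Finset (Fin (q + 1))), (1 - z ^ (x : ℕ)) = _
  rw [← Fin.image_succ_univ, prod_image (Fin.succ_injective q).injOn]
  simp only [Fin.val_succ]
  rw [Fin.prod_univ_eq_prod_range (fun i ↦ 1 - z ^ (i + 1)), hz.prod_one_sub_pow_eq_order,
    Nat.cast_succ]

variable {p g : ℕ} {z : R}

lemma prod_range_one_sub_pow_pow (hp : p.Prime) (hg : orderOf (g : ZMod p) = p - 1)
    (hz : IsPrimitiveRoot z p) : ∏ k ∈ range (p - 1), (1 - z ^ g ^ k) = p := by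
  have := Fact.mk hp
  calc ∏ k ∈ range (p - 1), (1 - z ^ g ^ k)
      = ∏ k ∈ range (orderOf (g : ZMod p)), (1 - z ^ ((g : ZMod p) ^ k).val) := by
        simp only [hg, ← Nat.cast_pow, pow_val_natCast hz.pow_eq_one]
    _ = ∏ x ∈ ({0}ᶜ : Finset (ZMod p)), (1 - z ^ x.val) :=
        prod_range_pow_eq_prod_compl_zero (by rw [hg, ZMod.card]) fun x : ZMod p ↦ 1 - z ^ x.val
    _ = p := prod_compl_zero_one_sub_pow_val hz

lemma prod_range_mul_one_sub_pow_pow (hp : p.Prime) (hg : orderOf (g : ZMod p) = p - 1)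
    (hz : IsPrimitiveRoot z p) (M : ℕ) :
    ∏ k ∈ range ((p - 1) * M), (1 - z ^ g ^ k) = p ^ M := by
  have hperiodic : (fun k ↦ 1 - z ^ g ^ k).Periodic (p - 1) :=
    hg ▸ (periodic_pow_pow_orderOf hz.pow_eq_one g).comp (1 - ·)
  rw [prod_range_mul_of_periodic hperiodic, prod_range_one_sub_pow_pow hp hg hz]

lemma natCast_mul_sum_filter_natCast_eq {m : ℕ} [NeZero m] {ψ : AddChar (ZMod m) R}
    (hψ : ψ.IsPrimitive) (t : Finset ℕ) (f : ℕ → R) (a : ZMod m) :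
    m * ∑ n ∈ t with ((n : ℕ) : ZMod m) = a, f n =
      ∑ h, ψ (-(h * a)) * ∑ n ∈ t, f n * ψ h ^ n := by
  have orthogonality (n : ℕ) :
      ∑ h, ψ (h * ((n : ZMod m) - a)) = if (n : ZMod m) = a then (m : R) else 0 := by
    simp [AddChar.sum_mulShift _ hψ, sub_eq_zero, ZMod.card]
  have factor (h : ZMod m) (n : ℕ) : ψ (h * ((n : ZMod m) - a)) = ψ (-(h * a)) * ψ h ^ n := by
    rw [← ψ.map_nsmul_eq_pow, ← ψ.map_add_eq_mul, nsmul_eq_mul]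
    ring_nf
  calc m * ∑ n ∈ t with ((n : ℕ) : ZMod m) = a, f n
      = ∑ n ∈ t, f n * ∑ h, ψ (h * ((n : ZMod m) - a)) := by
        simp only [orthogonality, sum_filter, mul_sum, mul_ite, mul_zero, mul_comm]
    _ = ∑ h, ψ (-(h * a)) * ∑ n ∈ t, f n * ψ h ^ n := by
        simp only [factor, mul_sum, mul_left_comm]
        exact sum_comm

end RootsOfUnity

section ThueMorse

lemma s_two_mul (n : ℕ) : s (2 * n) = s n := by
  rcases n.eq_zero_or_pos with rfl | hn
  · rfl
  · simp [s, Nat.digits_base_mul one_lt_two hn]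

lemma s_two_mul_add_one (n : ℕ) : s (2 * n + 1) = s n + 1 := by
  have hdigits : Nat.digits 2 (1 + 2 * n) = 1 :: Nat.digits 2 n :=
    Nat.digits_add 2 one_lt_two 1 n one_lt_two (.inl one_ne_zero)
  rw [s, add_comm, hdigits, List.sum_cons, add_comm, s]

lemma sum_pow_s_mul_pow {R : Type*} [CommSemiring R] (t z : R) (N : ℕ) :
    ∑ n ∈ range (2 ^ N), t ^ s n * z ^ n = ∏ k ∈ range N, (1 + t * z ^ 2 ^ k) := by
  induction N generalizing z with
  | zero => simp [s]
  | succ N ih =>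
    have hsq (k : ℕ) : z ^ 2 ^ (k + 1) = (z ^ 2) ^ 2 ^ k := by rw [← pow_mul, ← pow_succ']
    rw [pow_succ', sum_range_two_mul, prod_range_succ']
    simp only [hsq]
    rw [← ih, sum_mul]
    refine sum_congr rfl fun n _ ↦ ?_
    rw [s_two_mul, s_two_mul_add_one]
    ring

/-- The sum of the Thue–Morse signs `(-1) ^ s n` over the `n < x` in the residue class `a`, so that
`T m a 0 x - T m a 1 x = signSum m a x` when `a < m`. The class is an element of `ZMod m`
so that the additive characters of `ZMod m` apply to it directly. -/
def signSum (m : ℕ) (a : ZMod m) (x : ℕ) : ℤ :=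
  ∑ n ∈ range x with ((n : ℕ) : ZMod m) = a, (-1) ^ s n

lemma natCast_mul_signSum_two_pow {R : Type*} [CommRing R] [IsDomain R] {m : ℕ} [NeZero m]
    {ψ : AddChar (ZMod m) R} (hψ : ψ.IsPrimitive) (a : ZMod m) (N : ℕ) :
    (m : R) * signSum m a (2 ^ N) = ∑ h, ψ (-(h * a)) * ∏ k ∈ range N, (1 - ψ h ^ 2 ^ k) := by
  simp only [signSum, Int.cast_sum, Int.cast_pow, Int.cast_neg, Int.cast_one,
    natCast_mul_sum_filter_natCast_eq hψ, sum_pow_s_mul_pow, neg_one_mul, ← sub_eq_add_neg]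

variable {p M : ℕ} (hp : p.Prime) (hprim : orderOf (2 : ZMod p) = p - 1)
include hp hprim

lemma prod_one_sub_addChar_pow_two_pow {R : Type*} [CommRing R] [IsDomain R]
    {ψ : AddChar (ZMod p) R} (hψ : ψ.IsPrimitive) (hM : M ≠ 0) (h : ZMod p) :
    ∏ k ∈ range ((p - 1) * M), (1 - ψ h ^ 2 ^ k) = if h = 0 then 0 else (p : R) ^ M := by
  split_ifs with hh
  · have zero_lt : 0 < (p - 1) * M := Nat.mul_pos (Nat.sub_pos_of_lt hp.one_lt) hM.pos
    exact prod_eq_zero (mem_range.2 zero_lt) (by simp [hh])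
  · exact prod_range_mul_one_sub_pow_pow hp (mod_cast hprim)
      (isPrimitiveRoot_addChar_apply hp hψ hh) M

lemma mul_signSum_two_pow (a : ZMod p) (hM : M ≠ 0) :
    p * signSum p a (2 ^ ((p - 1) * M)) = p ^ M * ((if a = 0 then (p : ℤ) else 0) - 1) := by
  have := Fact.mk hp
  have hψ := ZMod.isPrimitive_stdAddChar p
  set ψ : AddChar (ZMod p) ℂ := ZMod.stdAddChar
  have sum_phases : ∑ h, ψ (-(h * a)) = if a = 0 then (p : ℂ) else 0 := by
    simpa [ZMod.card] using AddChar.sum_mulShift (-a) hψ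
  have main : (p : ℂ) * signSum p a (2 ^ ((p - 1) * M)) =
      p ^ M * ((if a = 0 then (p : ℂ) else 0) - 1) := by
    calc (p : ℂ) * signSum p a (2 ^ ((p - 1) * M))
        = ∑ h, ψ (-(h * a)) * (if h = 0 then 0 else (p : ℂ) ^ M) := by
          simp only [natCast_mul_signSum_two_pow hψ,
            prod_one_sub_addChar_pow_two_pow hp hprim hψ hM]
      _ = ∑ h, (p ^ M * ψ (-(h * a)) - if h = 0 then (p : ℂ) ^ M else 0) :=
          sum_congr rfl fun h _ ↦ by split_ifs with hh <;> simp [hh, mul_comm]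
      _ = p ^ M * ((if a = 0 then (p : ℂ) else 0) - 1) := by
          rw [sum_sub_distrib, ← mul_sum, sum_phases, sum_ite_eq' univ, if_pos (mem_univ 0),
            mul_sub, mul_one]
  exact_mod_cast main

lemma pow_le_mul_abs_signSum (a : ZMod p) (hM : M ≠ 0) :
    (p : ℤ) ^ M ≤ p * |signSum p a (2 ^ ((p - 1) * M))| := by
  have one_le_abs : (1 : ℤ) ≤ |(if a = 0 then (p : ℤ) else 0) - 1| := by
    have := hp.two_le
    split_ifs
    · exact (by omega : (1 : ℤ) ≤ p - 1).trans (le_abs_self _)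
    · simp
  calc (p : ℤ) ^ M ≤ p ^ M * |(if a = 0 then (p : ℤ) else 0) - 1| :=
        le_mul_of_one_le_right (by positivity) one_le_abs
    _ = |p * signSum p a (2 ^ ((p - 1) * M))| := by
        rw [mul_signSum_two_pow hp hprim a hM, abs_mul, abs_pow, Nat.abs_cast]
    _ = p * |signSum p a (2 ^ ((p - 1) * M))| := by rw [abs_mul, Nat.abs_cast]

end ThueMorse

section Discrepancy

variable {m a j : ℕ}

lemma two_mul_T (ha : a < m) (hj : j < 2) (x : ℕ) :
    (2 * T m a j x : ℤ) = x.count (· ≡ a [MOD m]) + (-1) ^ j * signSum m a x := by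
  have indicator (n : ℕ) :
      2 * (if s n % 2 = j then 1 else 0 : ℤ) = 1 + (-1) ^ j * (-1) ^ s n := by
    rw [neg_one_pow_eq_pow_mod_two (n := s n)]
    rcases Nat.mod_two_eq_zero_or_one (s n) with h | h <;> interval_cases j <;> simp [h]
  have hT : T m a j x = #{n ∈ {n ∈ range x | n ≡ a [MOD m]} | s n % 2 = j} := by
    simp only [T, filter_filter, Nat.ModEq, Nat.mod_eq_of_lt ha]
  simp only [hT, card_filter _ (filter _ _), Nat.cast_sum, Nat.cast_ite, Nat.cast_one,
    Nat.cast_zero, signSum, ZMod.natCast_eq_natCast_iff, mul_sum, indicator, sum_add_distrib,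
    Nat.count_eq_card_filter_range, sum_const, nsmul_one]

lemma abs_count_modEq_sub_div_le_one (hm : 0 < m) (v x : ℕ) :
    |(x.count (· ≡ v [MOD m]) : ℝ) - x / m| ≤ 1 := by
  have hm' : (0 : ℝ) < m := mod_cast hm
  have hdiv : (x : ℝ) / m = (x / m : ℕ) + (x % m : ℕ) / m := by
    field_simp
    exact_mod_cast (Nat.div_add_mod x m).symm
  have frac_nonneg : (0 : ℝ) ≤ (x % m : ℕ) / m := by positivity
  have frac_le_one : ((x % m : ℕ) : ℝ) / m ≤ 1 :=
    (div_le_one hm').2 (mod_cast (Nat.mod_lt x hm).le)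
  rw [Nat.count_modEq_card x hm v, hdiv, abs_le]
  push_cast
  split_ifs <;> constructor <;> linarith

lemma abs_signSum_le (ha : a < m) (hj : j < 2) (x : ℕ) :
    |(signSum m a x : ℝ)| ≤ 2 * |(T m a j x : ℝ) - x / (2 * m)| + 1 := by
  have hT : (2 * T m a j x : ℝ) = x.count (· ≡ a [MOD m]) + (-1) ^ j * signSum m a x :=
    mod_cast two_mul_T ha hj x
  calc |(signSum m a x : ℝ)| = |(-1) ^ j * (signSum m a x : ℝ)| := by simp [abs_mul]
    _ = |2 * ((T m a j x : ℝ) - x / (2 * m)) - (x.count (· ≡ a [MOD m]) - x / m)| := by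
        congr 1
        linear_combination -hT - (x : ℝ) / m * inv_mul_cancel₀ (two_ne_zero' ℝ)
    _ ≤ |2 * ((T m a j x : ℝ) - x / (2 * m))| + |(x.count (· ≡ a [MOD m]) : ℝ) - x / m| :=
        abs_sub _ _
    _ ≤ 2 * |(T m a j x : ℝ) - x / (2 * m)| + 1 := by
        rw [abs_mul, abs_two]
        gcongr
        exact abs_count_modEq_sub_div_le_one (a.zero_le.trans_lt ha) a x

lemma pow_le_four_mul_mul_abs_T_sub {p : ℕ} (hp : p.Prime) (hprim : orderOf (2 : ZMod p) = p - 1)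
    (ha : a < p) (hj : j < 2) {M : ℕ} (hM : 2 ≤ M) :
    (p : ℝ) ^ M ≤
      4 * p * |(T p a j (2 ^ ((p - 1) * M)) : ℝ) - (2 ^ ((p - 1) * M) : ℕ) / (2 * p)| := by
  have two_le : (2 : ℝ) ≤ p := mod_cast hp.two_le
  have hS : (p : ℝ) ^ M ≤ p * |(signSum p a (2 ^ ((p - 1) * M)) : ℝ)| :=
    mod_cast pow_le_mul_abs_signSum hp hprim a (by omega)
  have hT := mul_le_mul_of_nonneg_left (abs_signSum_le ha hj (2 ^ ((p - 1) * M))) p.cast_nonneg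
  have two_mul_le : 2 * (p : ℝ) ≤ p ^ M :=
    calc 2 * (p : ℝ) ≤ p ^ 2 := by nlinarith
      _ ≤ p ^ M := pow_le_pow_right₀ (by linarith) hM
  linarith

end Discrepancy

theorem gelfond_exponent_primitive_root_lower_general
    (p : ℕ) (hp : p.Prime) (hprim : orderOf (2 : ZMod p) = p - 1)
    (a : ℕ) (ha : a < p) (j : ℕ) (hj : j < 2) :
    ∃ c : ℝ, 0 < c ∧ ∀ X : ℕ, ∃ x : ℕ, X ≤ x ∧
      c * (x : ℝ) ^ (Real.log p / ((p - 1) * Real.log 2)) ≤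
        |(T p a j x : ℝ) - x / (2 * p)| := by
  have hp_pos : (0 : ℝ) < p := mod_cast hp.pos
  have hd : p - 1 ≠ 0 := (Nat.sub_pos_of_lt hp.one_lt).ne'
  refine ⟨1 / (4 * p), by positivity, fun X ↦ ⟨2 ^ ((p - 1) * (X + 2)), ?_, ?_⟩⟩
  · calc X ≤ X + 2 := Nat.le_add_right X 2
      _ ≤ (p - 1) * (X + 2) := Nat.le_mul_of_pos_left _ hd.pos
      _ ≤ 2 ^ ((p - 1) * (X + 2)) := Nat.lt_two_pow_self.le
  · have hα : ((2 ^ ((p - 1) * (X + 2)) : ℕ) : ℝ) ^ (Real.log p / ((p - 1) * Real.log 2)) =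
        (p : ℝ) ^ (X + 2) := by
      rw [← Nat.cast_pred hp.pos]
      exact_mod_cast pow_mul_rpow_log_div two_pos (OfNat.ofNat_ne_one 2) hp_pos hd (X + 2)
    rw [hα, one_div, inv_mul_le_iff₀ (by positivity)]
    exact pow_le_four_mul_mul_abs_T_sub hp hprim ha hj (Nat.le_add_left 2 X)

/-- Lower-bound half of Theorem 2: if `p` is an odd prime for which `2` is a primitive
root, then `T_{p,a}^{(j)}(x) - x/(2p) = Ω(x^{α-ε})` for every `ε > 0`, where
`α = ln p / ((p-1) ln 2)`. -/
theorem gelfond_exponent_primitive_root_lower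
    (p : ℕ) (hp : p.Prime) (hodd : Odd p)
    (hprim : orderOf (2 : ZMod p) = p - 1)
    (a : ℕ) (ha : a < p) (j : ℕ) (hj : j < 2)
    (ε : ℝ) (hε : 0 < ε) :
    ∃ c : ℝ, 0 < c ∧ ∀ X : ℕ, ∃ x : ℕ, X ≤ x ∧
      c * (x : ℝ) ^ (Real.log p / ((p - 1) * Real.log 2) - ε) ≤
        |(T p a j x : ℝ) - x / (2 * p)| := by
  exact exists_mul_rpow_le_of_exponent_le (sub_le_self _ hε.le)
    (gelfond_exponent_primitive_root_lower_general p hp hprim a ha j hj)
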